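/- arXiv:1908.06659 — 4 statements merged into one kernel-verified Lean document; each statement's English description precedes it below -/
import Mathlib

section
/- Let S ⊆ A be a coalition such that ∑_{n∈S} λ_n(f) > 0 for every f ∈ F, and define η_a(f) = λ_a(f) / ∑_{n∈S} λ_n(f) and Φ_a(C, S) = ∑_{f∈C} (b·λ_a(f) − s·η_a(f)). Then for every choice of subsidy fractions r : A → ℝ with r_a ≥ 0, the subsidy sub(C, S) = ∑_{a∈S} r_a·Φ_a(C, S) is maximized over all C ⊆ F at C = C*(S); in particular the maximizing set C*(S) is independent of the fractions r (neutrality). -/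
/-- With shares `η_a(f) = λ_a(f) / ∑_{n∈S} λ_n(f)` and
`Φ_a(C, S) = ∑_{f∈C} (b·λ_a(f) − s·η_a(f))`, for every choice of nonnegative subsidy
fractions `r`, the subsidy `sub(C, S) = ∑_{a∈S} r_a·Φ_a(C, S)` is maximized over all
`C ⊆ F` at `C = C*(S) = {f : ∑_{a∈S} λ_a(f) > s/b}`; in particular the maximizing set
is independent of `r` (neutrality). -/
theorem subsidy_maximized_at_cstar_neutral
    {A F : Type*} [Fintype A] [Fintype F]
    (lam : A → F → ℝ) (hlam : ∀ a f, 0 ≤ lam a f)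
    (b s : ℝ) (hb : 0 < b) (hs : 0 < s)
    (S : Finset A) (hS : ∀ f : F, 0 < ∑ n ∈ S, lam n f)
    (eta : A → F → ℝ) (heta : ∀ a f, eta a f = lam a f / ∑ n ∈ S, lam n f)
    (Phi : A → Finset F → ℝ)
    (hPhi : ∀ a C, Phi a C = ∑ f ∈ C, (b * lam a f - s * eta a f))
    (r : A → ℝ) (hr : ∀ a, 0 ≤ r a)
    (C : Finset F) :
    (∑ a ∈ S, r a * Phi a C) ≤
      ∑ a ∈ S, r a * Phi a (Finset.univ.filter (fun f => s / b < ∑ n ∈ S, lam n f)) := by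
  have key : ∀ a f, b * lam a f - s * eta a f
      = lam a f / (∑ n ∈ S, lam n f) * (b * (∑ n ∈ S, lam n f) - s) := by
    intro a f
    have h := (hS f).ne'
    rw [heta]
    field_simp
  apply Finset.sum_le_sum
  intro a _
  apply mul_le_mul_of_nonneg_left _ (hr a)
  rw [hPhi, hPhi, Finset.sum_filter]
  have hnn : ∀ f, 0 ≤ lam a f / (∑ n ∈ S, lam n f) :=
    fun f => div_nonneg (hlam a f) (hS f).le
  refine le_trans (Finset.sum_le_sum (g := fun f => if s / b < ∑ n ∈ S, lam n f then
    b * lam a f - s * eta a f else 0) ?_)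
    (Finset.sum_le_sum_of_subset_of_nonneg (Finset.subset_univ C) ?_)
  · intro f _
    split_ifs with h
    · exact le_rfl
    · rw [key]
      rw [not_lt, le_div_iff₀ hb] at h
      exact mul_nonpos_of_nonneg_of_nonpos (hnn f) (by linarith)
  · intro f _ _
    split_ifs with h
    · rw [key]
      rw [div_lt_iff₀ hb] at h
      exact mul_nonneg (hnn f) (by linarith)
    · exact le_rfl
end

section
/- Suppose ∑_{n∈A} λ_n(f) > 0 for every f ∈ F, and define η_a(f) = λ_a(f) / ∑_{n∈A} λ_n(f) and Φ_a(C, A) = ∑_{f∈C} (b·λ_a(f) − s·η_a(f)). Then the distribution {Φ_a(C*(A), A)}_{a∈A} lies in the core of the coalition game with value function v(S) = E(C*(S), S): for every coalition S ⊆ A, E(C*(S), S) ≤ ∑_{a∈S} Φ_a(C*(A), A). -/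
/-- With `η_a(f) = λ_a(f) / ∑_{n∈A} λ_n(f)` and
`Φ_a(C, A) = ∑_{f∈C} (b·λ_a(f) − s·η_a(f))`, the distribution `{Φ_a(C*(A), A)}` lies in
the core of the game `v(S) = E(C*(S), S)`: every coalition `S ⊆ A` satisfies
`E(C*(S), S) ≤ ∑_{a∈S} Φ_a(C*(A), A)`. -/
theorem distribution_in_core
    {A F : Type*} [Fintype A] [Fintype F]
    (lam : A → F → ℝ) (hlam : ∀ a f, 0 ≤ lam a f)
    (b s : ℝ) (hb : 0 < b) (hs : 0 < s)
    (hA : ∀ f : F, 0 < ∑ n : A, lam n f)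
    (eta : A → F → ℝ) (heta : ∀ a f, eta a f = lam a f / ∑ n : A, lam n f)
    (Phi : A → Finset F → ℝ)
    (hPhi : ∀ a C, Phi a C = ∑ f ∈ C, (b * lam a f - s * eta a f))
    (Cstar : Finset A → Finset F)
    (hCstar : ∀ S : Finset A,
      Cstar S = Finset.univ.filter (fun f => s / b < ∑ a ∈ S, lam a f))
    (S : Finset A) :
    (∑ f ∈ Cstar S, (b * ∑ a ∈ S, lam a f - s)) ≤
      ∑ a ∈ S, Phi a (Cstar Finset.univ) := by
  have hle : ∀ f, ∑ a ∈ S, lam a f ≤ ∑ n : A, lam n f := fun f =>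
    Finset.sum_le_sum_of_subset_of_nonneg (Finset.subset_univ S) (fun a _ _ => hlam a f)
  have hR : ∑ a ∈ S, Phi a (Cstar Finset.univ) =
      ∑ f ∈ Cstar Finset.univ,
        (b * ∑ a ∈ S, lam a f - s * ((∑ a ∈ S, lam a f) / ∑ n : A, lam n f)) := by
    simp only [hPhi, heta]
    rw [Finset.sum_comm]
    refine Finset.sum_congr rfl fun f _ => ?_
    rw [Finset.sum_sub_distrib, ← Finset.mul_sum, ← Finset.mul_sum, Finset.sum_div]
  have hsub : Cstar S ⊆ Cstar Finset.univ := by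
    intro f hf
    rw [hCstar, Finset.mem_filter] at hf ⊢
    exact ⟨Finset.mem_univ f, lt_of_lt_of_le hf.2 (hle f)⟩
  rw [hR]
  refine le_trans (Finset.sum_le_sum fun f _ => ?_)
    (Finset.sum_le_sum_of_subset_of_nonneg hsub fun f hf _ => ?_)
  · have h1 : (∑ a ∈ S, lam a f) / ∑ n : A, lam n f ≤ 1 := (div_le_one (hA f)).2 (hle f)
    have h2 := mul_le_mul_of_nonneg_left h1 hs.le
    linarith
  · rw [hCstar, Finset.mem_filter] at hf
    have h0 : 0 ≤ ∑ a ∈ S, lam a f := Finset.sum_nonneg fun a _ => hlam a f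
    have h1 : s < (∑ n : A, lam n f) * b := (div_lt_iff₀ hb).1 hf.2
    have h2 : s / (∑ n : A, lam n f) ≤ b := by
      rw [div_le_iff₀ (hA f)]
      linarith
    have h3 := mul_le_mul_of_nonneg_right h2 h0
    have h4 : s * ((∑ a ∈ S, lam a f) / ∑ n : A, lam n f)
        = s / (∑ n : A, lam n f) * ∑ a ∈ S, lam a f := by ring
    linarith
end

section
/- Let S ⊆ A be a coalition and suppose all ANOs in S have the same popularity distribution: λ_a(f) = T_a·q(f) with traffic volumes T_a > 0 and a common popularity law q : F → ℝ with q(f) > 0 for all f. Let H_a(C) = ∑_{f∈C} λ_a(f), ζ_a(C) = H_a(C) / ∑_{n∈S} H_n(C) (for C nonempty), and Φ_a(C, S) = b·H_a(C) − ζ_a(C)·|C|·s, with Φ_a(∅, S) = 0. Then ζ_a(C) = T_a / ∑_{n∈S} T_n for every nonempty C, and for every choice of subsidy fractions r : A → ℝ with r_a ≥ 0, the subsidy sub(C, S) = ∑_{a∈S} r_a·Φ_a(C, S) = (∑_{n∈S} r_n·T_n / ∑_{n∈S} T_n)·E(C, S) is maximized over all C ⊆ F at C = C*(S); the maximizer is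 independent of r (optimality and neutrality). -/
/-- If all ANOs in `S` share a common popularity law, `λ_a(f) = T_a·q(f)`
with `T_a > 0` and `q(f) > 0`, then `ζ_a(C) = T_a / ∑_{n∈S} T_n` for every nonempty `C`,
and for every choice of nonnegative subsidy fractions `r`, the subsidy
`sub(C, S) = ∑_{a∈S} r_a·Φ_a(C, S)` equals `(∑_{n∈S} r_n·T_n / ∑_{n∈S} T_n)·E(C, S)` and
is maximized over all `C ⊆ F` at `C = C*(S)`; the maximizer is independent of `r`
(optimality and neutrality). -/
theorem common_popularity_subsidy_optimal_neutral
    {A F : Type*} [Fintype A] [Fintype F]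
    (lam : A → F → ℝ)
    (T : A → ℝ) (hT : ∀ a, 0 < T a)
    (q : F → ℝ) (hq : ∀ f, 0 < q f)
    (hlam : ∀ a f, lam a f = T a * q f)
    (b s : ℝ) (hb : 0 < b) (hs : 0 < s)
    (S : Finset A) (hSne : S.Nonempty)
    (H : A → Finset F → ℝ) (hH : ∀ a C, H a C = ∑ f ∈ C, lam a f)
    (zeta : A → Finset F → ℝ)
    (hzeta : ∀ a, ∀ C : Finset F, C.Nonempty →
      zeta a C = H a C / ∑ n ∈ S, H n C)
    (Phi : A → Finset F → ℝ)
    (hPhi : ∀ a, ∀ C : Finset F, C.Nonempty →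
      Phi a C = b * H a C - zeta a C * (C.card : ℝ) * s)
    (hPhi0 : ∀ a, Phi a (∅ : Finset F) = 0) :
    (∀ a ∈ S, ∀ C : Finset F, C.Nonempty → zeta a C = T a / ∑ n ∈ S, T n) ∧
    (∀ r : A → ℝ, (∀ a, 0 ≤ r a) →
      (∀ C : Finset F,
        (∑ a ∈ S, r a * Phi a C) =
          ((∑ n ∈ S, r n * T n) / (∑ n ∈ S, T n)) *
            ∑ f ∈ C, (b * ∑ a ∈ S, lam a f - s)) ∧
      (∀ C : Finset F,
        (∑ a ∈ S, r a * Phi a C) ≤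
          ∑ a ∈ S, r a * Phi a
            (Finset.univ.filter (fun f => s / b < ∑ n ∈ S, lam n f)))) := by
  have hTS : 0 < ∑ n ∈ S, T n := Finset.sum_pos (fun a _ => hT a) hSne
  have hHq : ∀ a C, H a C = T a * ∑ f ∈ C, q f := by
    intro a C
    rw [hH, Finset.mul_sum]
    exact Finset.sum_congr rfl (fun f _ => hlam a f)
  have hz : ∀ a, ∀ C : Finset F, C.Nonempty → zeta a C = T a / ∑ n ∈ S, T n := by
    intro a C hC
    have hQ : 0 < ∑ f ∈ C, q f := Finset.sum_pos (fun f _ => hq f) hC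
    rw [hzeta a C hC]
    simp only [hHq]
    rw [← Finset.sum_mul]
    exact mul_div_mul_right _ _ hQ.ne'
  have hls : ∀ f, ∑ a ∈ S, lam a f = (∑ n ∈ S, T n) * q f := by
    intro f
    rw [Finset.sum_mul]
    exact Finset.sum_congr rfl (fun a _ => hlam a f)
  have hP : ∀ a, ∀ C : Finset F, Phi a C =
      T a / (∑ n ∈ S, T n) * ∑ f ∈ C, (b * ∑ a ∈ S, lam a f - s) := by
    intro a C
    rcases C.eq_empty_or_nonempty with rfl | hC
    · simp [hPhi0]
    · rw [hPhi a C hC, hz a C hC, hHq]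
      simp only [hls]
      rw [Finset.sum_sub_distrib, ← Finset.mul_sum, ← Finset.mul_sum, Finset.sum_const,
        nsmul_eq_mul]
      field_simp
  have hE : ∀ r : A → ℝ, ∀ C : Finset F,
        (∑ a ∈ S, r a * Phi a C) =
          ((∑ n ∈ S, r n * T n) / (∑ n ∈ S, T n)) *
            ∑ f ∈ C, (b * ∑ a ∈ S, lam a f - s) := by
    intro r C
    rw [Finset.sum_div, Finset.sum_mul]
    refine Finset.sum_congr rfl (fun a _ => ?_)
    rw [hP]
    ring
  refine ⟨fun a _ => hz a, fun r hr => ⟨hE r, fun C => ?_⟩⟩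
  rw [hE, hE]
  refine mul_le_mul_of_nonneg_left ?_
    (div_nonneg (Finset.sum_nonneg fun a _ => mul_nonneg (hr a) (hT a).le) hTS.le)
  rw [Finset.sum_filter]
  calc ∑ f ∈ C, (b * ∑ a ∈ S, lam a f - s)
      ≤ ∑ f ∈ C, (if s / b < ∑ n ∈ S, lam n f then (b * ∑ a ∈ S, lam a f - s) else 0) := by
        refine Finset.sum_le_sum (fun f _ => ?_)
        split_ifs with h
        · exact le_rfl
        · rw [not_lt, le_div_iff₀ hb] at h
          linarith
    _ ≤ _ := by
        refine Finset.sum_le_sum_of_subset_of_nonneg (Finset.subset_univ C) (fun f _ _ => ?_)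
        split_ifs with h
        · rw [div_lt_iff₀ hb] at h
          linarith
        · exact le_rfl
end

section
/- Let 0 < α < 1, F > 0, T > 0, fanouts e₁, e₂ ≥ 1, storage costs s⁽¹⁾, s⁽²⁾, s⁽³⁾ > 0 with e₁·s⁽¹⁾ > s⁽²⁾ and e₂·s⁽²⁾ > s⁽³⁾, and bandwidth costs b⁽¹⁾, b⁽²⁾, b⁽³⁾ > 0. Define D₁ = F·min{1, ((1−α)·T·b⁽¹⁾ / (F·e₂·(e₁·s⁽¹⁾ − s⁽²⁾)))^{1/α}}, D₂ = F·min{1, ((1−α)·T·b⁽²⁾ / (F·(e₂·s⁽²⁾ − s⁽³⁾)))^{1/α}}, and D₃ = F·min{1, ((1−α)·T·b⁽³⁾ / (F·s⁽³⁾))^{1/α}}, and suppose D₁ ≤ D₂ ≤ D₃. Then the cost function cost(C₁, C₂, C₃) = e₁·e₂·C₁·s⁽¹⁾ + e₂·C₂·s⁽²⁾ + C₃·s⁽³⁾ + T·[(1 − h(C₁))·b⁽¹⁾ + (1 − h(C₁+C₂))·b⁽²⁾ + (1 − h(C₁+C₂+C₃))·b⁽³⁾], with h(x) = (x/F)^{1−α},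 attains its global minimum over the feasible set {C₁, C₂, C₃ ≥ 0, C₁+C₂+C₃ ≤ F} at (C₁, C₂, C₃) = (D₁, D₂ − D₁, D₃ − D₂); equivalently, the optimal cumulative cache sizes are C₁ = D₁, C₁+C₂ = D₂ and C₁+C₂+C₃ = D₃. -/
lemma tier_aux (α F k B D x : ℝ) (hα0 : 0 < α) (hα1 : α < 1) (hF : 0 < F)
    (hk : 0 < k) (hB : 0 < B)
    (hD : D = F * min 1 (((1 - α) * B / (F * k)) ^ (1 / α))) (hx0 : 0 ≤ x) (hxF : x ≤ F) :
    k * D - B * (D / F) ^ (1 - α) ≤ k * x - B * (x / F) ^ (1 - α) := by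
  have hp : 0 < 1 - α := by linarith
  set r := (1 - α) * B / (F * k) with hr
  have hr0 : 0 < r := by positivity
  have hrk : r * (F * k) = (1 - α) * B := by rw [hr]; field_simp
  set d := min 1 (r ^ (1 / α)) with hd
  have hd0 : 0 < d := lt_min one_pos (Real.rpow_pos_of_pos hr0 _)
  obtain ⟨u, rfl⟩ : ∃ u, x = F * u := ⟨x / F, by field_simp⟩
  have hu0 : 0 ≤ u := nonneg_of_mul_nonneg_right hx0 hF
  have hu1 : u ≤ 1 := by
    by_contra! hc
    nlinarith
  rw [hD, mul_div_cancel_left₀ _ hF.ne', mul_div_cancel_left₀ _ hF.ne']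
  have hm0 : 0 < d ^ α := Real.rpow_pos_of_pos hd0 _
  have hdp : d ^ (1 - α) = d / d ^ α := by rw [Real.rpow_sub hd0, Real.rpow_one]
  have hbern : (1 + (u / d - 1)) ^ (1 - α) ≤ 1 + (1 - α) * (u / d - 1) :=
    rpow_one_add_le_one_add_mul_self (by have : 0 ≤ u / d := by positivity
                                         linarith) hp.le (by linarith)
  have hup : u ^ (1 - α) ≤ d / d ^ α + (1 - α) * (u - d) / d ^ α := by
    have h1 : u ^ (1 - α) = d ^ (1 - α) * (1 + (u / d - 1)) ^ (1 - α) := by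
      rw [← Real.mul_rpow hd0.le (by have : 0 ≤ u / d := by positivity
                                     linarith)]
      congr 1
      field_simp
      ring
    rw [h1, hdp]
    refine (mul_le_mul_of_nonneg_left hbern (by positivity)).trans_eq ?_
    field_simp
  have hkey : B * ((1 - α) * (u - d) / d ^ α) ≤ k * F * (u - d) := by
    have e : B * ((1 - α) * (u - d) / d ^ α) = (r * (F * k)) * (u - d) / d ^ α := by
      rw [hrk]; ring
    rw [e, div_le_iff₀ hm0]
    rcases le_total 1 (r ^ (1 / α)) with hc | hc
    · have hd1 : d = 1 := min_eq_left hc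
      have hr1 : 1 ≤ r := by
        by_contra! hlt
        exact absurd (Real.rpow_lt_one hr0.le hlt (by positivity : 0 < 1 / α)) (not_lt.mpr hc)
      rw [hd1, Real.one_rpow]
      have : 0 ≤ (r - 1) * (1 - u) * (k * F) := by
        have := sub_nonneg.mpr hr1
        have := sub_nonneg.mpr hu1
        positivity
      nlinarith
    · have hd1 : d = r ^ (1 / α) := min_eq_right hc
      have hdr : d ^ α = r := by
        rw [hd1, ← Real.rpow_mul hr0.le, one_div_mul_cancel hα0.ne', Real.rpow_one]
      rw [hdr]
      apply le_of_eq; ring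
  have := mul_le_mul_of_nonneg_left hup hB.le
  rw [hdp]
  nlinarith

/-- In the symmetric three-tier tree, with cumulative targets
`D₁, D₂, D₃` given by the closed-form expressions and satisfying `D₁ ≤ D₂ ≤ D₃`,
the network cost
`cost(C₁, C₂, C₃) = e₁e₂C₁s⁽¹⁾ + e₂C₂s⁽²⁾ + C₃s⁽³⁾
  + T[(1−h(C₁))b⁽¹⁾ + (1−h(C₁+C₂))b⁽²⁾ + (1−h(C₁+C₂+C₃))b⁽³⁾]`,
with `h(x) = (x/F)^{1−α}`, attains its global minimum over
`{C₁, C₂, C₃ ≥ 0, C₁+C₂+C₃ ≤ F}` at `(C₁, C₂, C₃) = (D₁, D₂ − D₁, D₃ − D₂)`. -/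
theorem three_tier_optimal_cache_sizes
    (α F T e₁ e₂ s₁ s₂ s₃ b₁ b₂ b₃ : ℝ)
    (hα0 : 0 < α) (hα1 : α < 1) (hF : 0 < F) (hT : 0 < T)
    (he₁ : 1 ≤ e₁) (he₂ : 1 ≤ e₂)
    (hs₁ : 0 < s₁) (hs₂ : 0 < s₂) (hs₃ : 0 < s₃)
    (hs12 : s₂ < e₁ * s₁) (hs23 : s₃ < e₂ * s₂)
    (hb₁ : 0 < b₁) (hb₂ : 0 < b₂) (hb₃ : 0 < b₃)
    (h : ℝ → ℝ) (hh : ∀ x : ℝ, h x = (x / F) ^ (1 - α))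
    (cost : ℝ → ℝ → ℝ → ℝ)
    (hcost : ∀ C₁ C₂ C₃ : ℝ,
      cost C₁ C₂ C₃ =
        e₁ * e₂ * C₁ * s₁ + e₂ * C₂ * s₂ + C₃ * s₃ +
          T * ((1 - h C₁) * b₁ + (1 - h (C₁ + C₂)) * b₂ +
                (1 - h (C₁ + C₂ + C₃)) * b₃))
    (D₁ D₂ D₃ : ℝ)
    (hD₁ : D₁ = F * min 1 (((1 - α) * T * b₁ / (F * e₂ * (e₁ * s₁ - s₂))) ^ (1 / α)))
    (hD₂ : D₂ = F * min 1 (((1 - α) * T * b₂ / (F * (e₂ * s₂ - s₃))) ^ (1 / α)))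
    (hD₃ : D₃ = F * min 1 (((1 - α) * T * b₃ / (F * s₃)) ^ (1 / α)))
    (hD12 : D₁ ≤ D₂) (hD23 : D₂ ≤ D₃) :
    ∀ C₁ C₂ C₃ : ℝ, 0 ≤ C₁ → 0 ≤ C₂ → 0 ≤ C₃ → C₁ + C₂ + C₃ ≤ F →
      cost D₁ (D₂ - D₁) (D₃ - D₂) ≤ cost C₁ C₂ C₃ := by
  intro C₁ C₂ C₃ h1 h2 h3 hle
  have he : 0 < e₂ := by linarith
  have a1 := tier_aux α F (e₂ * (e₁ * s₁ - s₂)) (T * b₁) D₁ C₁ hα0 hα1 hF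
    (mul_pos he (by linarith)) (by positivity)
    (by rw [hD₁, ← mul_assoc, ← mul_assoc]) h1 (by linarith)
  have a2 := tier_aux α F (e₂ * s₂ - s₃) (T * b₂) D₂ (C₁ + C₂) hα0 hα1 hF
    (by linarith) (by positivity)
    (by rw [hD₂, ← mul_assoc]) (by linarith) (by linarith)
  have a3 := tier_aux α F s₃ (T * b₃) D₃ (C₁ + C₂ + C₃) hα0 hα1 hF
    hs₃ (by positivity)
    (by rw [hD₃, ← mul_assoc]) (by linarith) hle
  have q2 : D₁ + (D₂ - D₁) = D₂ := by ring
  have q3 : D₂ + (D₃ - D₂) = D₃ := by ring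
  rw [hcost, hcost, q2, q3]
  simp only [hh]
  linarith
end
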